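/- Define the distorted Fourier basis e(x, ξ) := (2π)^{−1/2} · [ (−ξ² − 3iξ tanh(x) + 3 tanh²(x) − 1) / (−ξ² + 3i|ξ| + 2) ] · e^{ixξ} for x, ξ ∈ ℝ, and for a Schwartz function f : ℝ → ℂ define its distorted Fourier transform 𝓕̃f(ξ) := ∫_ℝ conj(e(x, ξ)) f(x) dx. Then for every Schwartz function f satisfying the orthogonality conditions ∫_ℝ f(x) sech²(x) dx = 0 and ∫_ℝ f(x) sech(x) tanh(x) dx = 0 (i.e., f is orthogonal to the bound states Y and Q′ of H = −∂ₓ² − 6 sech²(x)), one has the Plancherel identity ∫_ℝ |𝓕̃f(ξ)|² dξ = ∫_ℝ |f(x)|² dx. -/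

import Mathlib

/-!
Supersymmetric factorization: the operators `A_k = ∂ + k tanh`, with formal adjoints
`A_k* = -∂ + k tanh`, satisfy `A_{k+1} A_{k+1}* = A_k* A_k + (2k + 1)`. Hence
`D_N = A_1 ⋯ A_N` intertwines the Pöschl–Teller operator `-∂² - N(N+1) sech²` with `-∂²`, and
`D_N D_N* = ∏_{k ≤ N} (k² - ∂²)` has constant coefficients.

The kernel of `A_k` is spanned by `sech^k`, and `k² - ∂²` is invertible on Schwartz space, so by
induction on `N` every `f` orthogonal to the bound states is of the form `D_N* h`. By Plancherel,
`‖f‖² = ⟨D_N D_N* h, h⟩ = ∫ ∏ (k² + ξ²) |ĥ|² = ∫ |(D_N f)^|² / ∏ (k² + ξ²)`.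
For `N = 2` the last integrand is `|𝓕̃f|²`, because the numerator of `e(x, ξ)` is
`(∂ - 2 tanh)(∂ - tanh) e^{ixξ}` and its denominator has squared modulus `(1 + ξ²)(4 + ξ²)`.
-/

open MeasureTheory Real Complex

noncomputable def sech (x : ℝ) : ℝ := (Real.cosh x)⁻¹

/-- The distorted Fourier basis associated with `H = −∂ₓ² − 6 sech²`. -/
noncomputable def eFun (x ξ : ℝ) : ℂ :=
  ((Real.sqrt (2 * Real.pi) : ℝ) : ℂ)⁻¹ *
    ((-(ξ : ℂ) ^ 2 - 3 * Complex.I * (ξ : ℂ) * ((Real.tanh x : ℝ) : ℂ)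
        + 3 * ((Real.tanh x : ℝ) : ℂ) ^ 2 - 1) /
      (-(ξ : ℂ) ^ 2 + 3 * Complex.I * ((|ξ| : ℝ) : ℂ) + 2)) *
    Complex.exp (Complex.I * (x : ℂ) * (ξ : ℂ))

/-- The distorted Fourier transform of a Schwartz function. -/
noncomputable def distFT (f : ℝ → ℂ) (ξ : ℝ) : ℂ :=
  ∫ x : ℝ, (starRingEnd ℂ) (eFun x ξ) * f x

open scoped FourierTransform SchwartzMap ContDiff ComplexInnerProductSpace

namespace PoschlTeller

section Hyperbolic

lemma hasDerivAt_tanh (x : ℝ) :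
    HasDerivAt (fun y : ℝ ↦ (Real.tanh y : ℂ)) (1 - (Real.tanh x : ℂ) ^ 2) x := by
  have hcosh : Real.cosh x ≠ 0 := (Real.cosh_pos x).ne'
  have h : HasDerivAt Real.tanh (1 - Real.tanh x ^ 2) x := by
    rw [funext Real.tanh_eq_sinh_div_cosh]
    refine ((Real.hasDerivAt_sinh x).div (Real.hasDerivAt_cosh x) hcosh).congr_deriv ?_
    field_simp
  exact_mod_cast h.ofReal_comp

lemma hasDerivAt_sech (x : ℝ) :
    HasDerivAt (fun y : ℝ ↦ (sech y : ℂ)) (-Real.tanh x * sech x) x := by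
  have hcosh : Real.cosh x ≠ 0 := (Real.cosh_pos x).ne'
  have h : HasDerivAt sech (-Real.tanh x * sech x) x := by
    refine ((Real.hasDerivAt_cosh x).inv hcosh).congr_deriv ?_
    rw [sech, Real.tanh_eq_sinh_div_cosh]
    field_simp
  exact_mod_cast h.ofReal_comp

lemma hasDerivAt_cosh_pow (k : ℕ) (x : ℝ) :
    HasDerivAt (fun y : ℝ ↦ (Real.cosh y : ℂ) ^ k) (k * Real.tanh x * Real.cosh x ^ k) x := by
  have hcosh : Real.cosh x ≠ 0 := (Real.cosh_pos x).ne'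
  have h : HasDerivAt (fun y ↦ Real.cosh y ^ k) (k * Real.tanh x * Real.cosh x ^ k) x := by
    refine ((Real.hasDerivAt_cosh x).pow k).congr_deriv ?_
    rw [Real.tanh_eq_sinh_div_cosh]
    cases k with
    | zero => simp
    | succ k =>
      rw [Nat.add_sub_cancel]
      field_simp
      ring
  exact_mod_cast h.ofReal_comp

lemma norm_tanh_le_one (x : ℝ) : ‖(Real.tanh x : ℂ)‖ ≤ 1 := by
  rw [Complex.norm_real]
  exact (Real.abs_tanh_lt_one x).le

lemma norm_sech_le_one (x : ℝ) : ‖(sech x : ℂ)‖ ≤ 1 := by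
  rw [Complex.norm_real, sech, norm_inv, Real.norm_of_nonneg (Real.cosh_pos x).le]
  exact inv_le_one_of_one_le₀ (Real.one_le_cosh x)

lemma exists_iteratedDeriv_eq_polynomial_tanh_mul {φ : ℝ → ℂ} {P : Polynomial ℂ}
    (hφ : ∀ x, HasDerivAt φ (P.eval (Real.tanh x : ℂ) * φ x) x) (n : ℕ) :
    ∃ Q : Polynomial ℂ, iteratedDeriv n φ = fun x ↦ Q.eval (Real.tanh x : ℂ) * φ x := by
  induction n with
  | zero => exact ⟨1, by simp⟩
  | succ n ih =>
    obtain ⟨Q, hQ⟩ := ih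
    refine ⟨Q.derivative * (1 - Polynomial.X ^ 2) + Q * P, ?_⟩
    ext x
    rw [iteratedDeriv_succ, hQ]
    have hQx := (Q.hasDerivAt (Real.tanh x : ℂ)).comp x (hasDerivAt_tanh x)
    refine (hQx.mul (hφ x)).deriv.trans ?_
    simp only [Function.comp_apply, Polynomial.eval_add, Polynomial.eval_sub,
      Polynomial.eval_mul, Polynomial.eval_pow, Polynomial.eval_one, Polynomial.eval_X]
    ring

lemma hasTemperateGrowth_of_logDeriv_polynomial_tanh {φ : ℝ → ℂ} {P : Polynomial ℂ} {C : ℝ}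
    (hφ : ∀ x, HasDerivAt φ (P.eval (Real.tanh x : ℂ) * φ x) x) (hC : ∀ x, ‖φ x‖ ≤ C) :
    φ.HasTemperateGrowth := by
  have hdiff : Differentiable ℝ φ := fun x ↦ (hφ x).differentiableAt
  have htanh : Differentiable ℝ (fun x : ℝ ↦ (Real.tanh x : ℂ)) :=
    fun x ↦ (hasDerivAt_tanh x).differentiableAt
  refine ⟨contDiff_of_differentiable_iteratedDeriv fun n _ ↦ ?_, fun n ↦ ?_⟩
  · obtain ⟨Q, hQ⟩ := exists_iteratedDeriv_eq_polynomial_tanh_mul hφ n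
    rw [hQ]
    exact ((Q.differentiable.restrictScalars ℝ).comp htanh).mul hdiff
  · obtain ⟨Q, hQ⟩ := exists_iteratedDeriv_eq_polynomial_tanh_mul hφ n
    obtain ⟨B, hB⟩ := (isCompact_closedBall (0 : ℂ) 1).exists_bound_of_continuousOn
      Q.continuous.continuousOn
    refine ⟨0, B * C, fun x ↦ ?_⟩
    have hBx := hB (Real.tanh x : ℂ) (mem_closedBall_zero_iff.2 (norm_tanh_le_one x))
    rw [norm_iteratedFDeriv_eq_norm_iteratedDeriv, hQ, norm_mul, pow_zero, mul_one]
    exact mul_le_mul hBx (hC x) (norm_nonneg _) ((norm_nonneg _).trans hBx)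

lemma hasTemperateGrowth_tanh : (fun x : ℝ ↦ (Real.tanh x : ℂ)).HasTemperateGrowth := by
  -- `tanh` vanishes at the origin, but `1 + tanh` has logarithmic derivative `1 - tanh`
  have h : (fun x : ℝ ↦ 1 + (Real.tanh x : ℂ)).HasTemperateGrowth := by
    refine hasTemperateGrowth_of_logDeriv_polynomial_tanh (P := 1 - Polynomial.X) (C := 1 + 1)
      (fun x ↦ ((hasDerivAt_tanh x).const_add 1).congr_deriv ?_)
      fun x ↦ (norm_add_le _ _).trans (add_le_add norm_one.le (norm_tanh_le_one x))
    simp only [Polynomial.eval_sub, Polynomial.eval_one, Polynomial.eval_X]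
    ring
  simpa only [add_sub_cancel_left] using h.fun_sub (.const 1)

lemma hasTemperateGrowth_sech : (fun x : ℝ ↦ (sech x : ℂ)).HasTemperateGrowth :=
  hasTemperateGrowth_of_logDeriv_polynomial_tanh (P := -Polynomial.X)
    (fun x ↦ (hasDerivAt_sech x).congr_deriv (by simp)) norm_sech_le_one

end Hyperbolic

section PlaneWave

/-- The plane wave `x ↦ e^{-ixξ}`, the kernel of the Fourier transform at frequency `ξ` in the
paper's normalization. -/
noncomputable def planeWave (ξ x : ℝ) : ℂ := Complex.exp (-(I * x * ξ))

lemma hasDerivAt_planeWave (ξ x : ℝ) :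
    HasDerivAt (planeWave ξ) (-(I * ξ) * planeWave ξ x) x := by
  have h : HasDerivAt (fun y : ℝ ↦ -(I * (y : ℂ) * ξ)) (-(I * ξ)) x := by
    simpa using (((hasDerivAt_id x).ofReal_comp.const_mul I).mul_const (ξ : ℂ)).fun_neg
  exact h.cexp.congr_deriv (mul_comm _ _)

lemma hasTemperateGrowth_planeWave (ξ : ℝ) : (planeWave ξ).HasTemperateGrowth :=
  hasTemperateGrowth_of_logDeriv_polynomial_tanh (P := Polynomial.C (-(I * ξ))) (C := 1)
    (fun x ↦ by simpa using hasDerivAt_planeWave ξ x)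
    fun x ↦ by simp [planeWave, Complex.norm_exp]

lemma fourier_div_two_pi_eq_integral_planeWave (u : 𝓢(ℝ, ℂ)) (ξ : ℝ) :
    𝓕 u (ξ / (2 * π)) = ∫ x, planeWave ξ x * u x := by
  rw [SchwartzMap.fourier_coe, Real.fourier_real_eq_integral_exp_smul]
  refine integral_congr_ae (.of_forall fun x ↦ ?_)
  have hπ : (π : ℂ) ≠ 0 := ofReal_ne_zero.2 Real.pi_ne_zero
  simp only [smul_eq_mul, planeWave]
  congr 2
  push_cast
  field_simp

end PlaneWave

section Factorization

/-- The operator `A_k = ∂ + k tanh`, which intertwines the Pöschl–Teller operators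
`-∂² - k(k+1) sech²` and `-∂² - (k-1)k sech²`. -/
noncomputable def lowering (k : ℕ) : 𝓢(ℝ, ℂ) →L[ℂ] 𝓢(ℝ, ℂ) :=
  SchwartzMap.derivCLM ℂ ℂ + (k : ℂ) • SchwartzMap.smulLeftCLM ℂ fun x : ℝ ↦ (Real.tanh x : ℂ)

/-- The formal adjoint `A_k* = -∂ + k tanh` of `lowering k`. -/
noncomputable def raising (k : ℕ) : 𝓢(ℝ, ℂ) →L[ℂ] 𝓢(ℝ, ℂ) :=
  -SchwartzMap.derivCLM ℂ ℂ + (k : ℂ) • SchwartzMap.smulLeftCLM ℂ fun x : ℝ ↦ (Real.tanh x : ℂ)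

/-- The constant coefficient operator `m² - ∂²`. -/
noncomputable def massiveLaplacian (m : ℕ) : 𝓢(ℝ, ℂ) →L[ℂ] 𝓢(ℝ, ℂ) :=
  (m : ℂ) ^ 2 • .id ℂ 𝓢(ℝ, ℂ) - (SchwartzMap.derivCLM ℂ ℂ).comp (SchwartzMap.derivCLM ℂ ℂ)

variable (k : ℕ) (u : 𝓢(ℝ, ℂ)) (x : ℝ)

lemma lowering_apply : lowering k u x = deriv u x + k * (Real.tanh x * u x) :=
  congrArg (fun z ↦ deriv u x + k * z)
    (SchwartzMap.smulLeftCLM_apply_apply hasTemperateGrowth_tanh u x)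

lemma raising_apply : raising k u x = -deriv u x + k * (Real.tanh x * u x) :=
  congrArg (fun z ↦ -deriv u x + k * z)
    (SchwartzMap.smulLeftCLM_apply_apply hasTemperateGrowth_tanh u x)

lemma massiveLaplacian_apply :
    massiveLaplacian k u x = (k : ℂ) ^ 2 * u x - deriv (deriv u) x :=
  rfl

lemma hasDerivAt_deriv : HasDerivAt (deriv u) (deriv (deriv u) x) x :=
  (SchwartzMap.derivCLM ℂ ℂ u).hasDerivAt x

lemma hasDerivAt_tanh_mul :
    HasDerivAt (fun y ↦ (Real.tanh y : ℂ) * u y)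
      ((1 - (Real.tanh x : ℂ) ^ 2) * u x + Real.tanh x * deriv u x) x :=
  (hasDerivAt_tanh x).mul (u.hasDerivAt x)

lemma deriv_lowering :
    deriv (lowering k u) x = deriv (deriv u) x
      + k * ((1 - (Real.tanh x : ℂ) ^ 2) * u x + Real.tanh x * deriv u x) := by
  rw [funext (lowering_apply k u)]
  exact ((hasDerivAt_deriv u x).add ((hasDerivAt_tanh_mul u x).const_mul (k : ℂ))).deriv

lemma deriv_raising :
    deriv (raising k u) x = -deriv (deriv u) x
      + k * ((1 - (Real.tanh x : ℂ) ^ 2) * u x + Real.tanh x * deriv u x) := by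
  rw [funext (raising_apply k u)]
  exact ((hasDerivAt_deriv u x).neg.add ((hasDerivAt_tanh_mul u x).const_mul (k : ℂ))).deriv

lemma lowering_succ_raising_succ :
    lowering (k + 1) (raising (k + 1) u) =
      raising k (lowering k u) + (2 * k + 1 : ℂ) • u := by
  ext x
  rw [add_apply, smul_apply, smul_eq_mul, lowering_apply, deriv_raising, raising_apply,
    raising_apply, deriv_lowering, lowering_apply]
  push_cast
  ring

lemma lowering_one_raising_one : lowering 1 (raising 1 u) = massiveLaplacian 1 u := by
  ext x
  rw [lowering_apply, deriv_raising, raising_apply, massiveLaplacian_apply]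
  push_cast
  ring

lemma massiveLaplacian_succ :
    massiveLaplacian (k + 1) u = massiveLaplacian k u + (2 * k + 1 : ℂ) • u := by
  ext x
  rw [add_apply, smul_apply, smul_eq_mul, massiveLaplacian_apply, massiveLaplacian_apply]
  push_cast
  ring

end Factorization

section Darboux

/-- The Darboux transformation `D_N = A_1 ⋯ A_N`, which intertwines `-∂² - N(N+1) sech²` with the
free operator `-∂²`. -/
noncomputable def toFree : ℕ → 𝓢(ℝ, ℂ) →L[ℂ] 𝓢(ℝ, ℂ)
  | 0 => .id ℂ _
  | N + 1 => (toFree N).comp (lowering (N + 1))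

/-- The formal adjoint `D_N* = A_N* ⋯ A_1*` of `toFree N`. -/
noncomputable def ofFree : ℕ → 𝓢(ℝ, ℂ) →L[ℂ] 𝓢(ℝ, ℂ)
  | 0 => .id ℂ _
  | N + 1 => (raising (N + 1)).comp (ofFree N)

lemma toFree_succ (N : ℕ) (u : 𝓢(ℝ, ℂ)) : toFree (N + 1) u = toFree N (lowering (N + 1) u) :=
  rfl

lemma ofFree_succ (N : ℕ) (u : 𝓢(ℝ, ℂ)) : ofFree (N + 1) u = raising (N + 1) (ofFree N u) :=
  rfl

lemma lowering_raising_ofFree (N : ℕ) (u : 𝓢(ℝ, ℂ)) :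
    lowering (N + 1) (raising (N + 1) (ofFree N u)) =
      ofFree N (massiveLaplacian (N + 1) u) := by
  induction N with
  | zero => exact lowering_one_raising_one u
  | succ N ih =>
    rw [lowering_succ_raising_succ, ofFree_succ, ih, massiveLaplacian_succ (N + 1),
      map_add, map_smul, ofFree_succ, ofFree_succ]

lemma toFree_succ_ofFree_succ (N : ℕ) (u : 𝓢(ℝ, ℂ)) :
    toFree (N + 1) (ofFree (N + 1) u) = toFree N (ofFree N (massiveLaplacian (N + 1) u)) := by
  rw [toFree_succ, ofFree_succ, lowering_raising_ofFree]

end Darboux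

section FourierMultiplier

lemma fourier_derivCLM (u : 𝓢(ℝ, ℂ)) (η : ℝ) :
    𝓕 (SchwartzMap.derivCLM ℂ ℂ u) η = 2 * π * I * η * 𝓕 u η :=
  congrFun (Real.fourier_deriv u.integrable u.differentiable
    (SchwartzMap.derivCLM ℂ ℂ u).integrable) η

lemma fourier_massiveLaplacian (m : ℕ) (u : 𝓢(ℝ, ℂ)) (η : ℝ) :
    𝓕 (massiveLaplacian m u) η = ((m ^ 2 + (2 * π * η) ^ 2 : ℝ) : ℂ) * 𝓕 u η := by
  have h : 𝓕 (massiveLaplacian m u) =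
      (m : ℂ) ^ 2 • 𝓕 u - 𝓕 (SchwartzMap.derivCLM ℂ ℂ (SchwartzMap.derivCLM ℂ ℂ u)) := by
    simp only [← FourierTransform.fourierCLM_apply (R := ℂ), ← map_smul, ← map_sub]
    rfl
  rw [h, sub_apply, smul_apply, smul_eq_mul, fourier_derivCLM, fourier_derivCLM]
  push_cast
  linear_combination (-4 * π ^ 2 * η ^ 2 * 𝓕 u η) * I_sq

/-- The symbol `∏_{k ≤ N} (k² + ξ²)` of the constant coefficient operator `D_N D_N*`, as a function
of the paper's frequency `ξ`; Mathlib's frequency is `ξ / 2π`. -/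
noncomputable def freeSymbol (N : ℕ) (ξ : ℝ) : ℝ :=
  ∏ k ∈ Finset.range N, ((k + 1 : ℝ) ^ 2 + ξ ^ 2)

lemma freeSymbol_pos (N : ℕ) (ξ : ℝ) : 0 < freeSymbol N ξ :=
  Finset.prod_pos fun k _ ↦ by positivity

lemma freeSymbol_two (ξ : ℝ) : freeSymbol 2 ξ = (1 + ξ ^ 2) * (4 + ξ ^ 2) := by
  rw [freeSymbol, Finset.prod_range_succ, Finset.prod_range_one]
  norm_num

lemma fourier_toFree_ofFree (N : ℕ) (u : 𝓢(ℝ, ℂ)) (η : ℝ) :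
    𝓕 (toFree N (ofFree N u)) η = (freeSymbol N (2 * π * η) : ℂ) * 𝓕 u η := by
  induction N generalizing u with
  | zero => simp [toFree, ofFree, freeSymbol]
  | succ N ih =>
    rw [toFree_succ_ofFree_succ, ih, fourier_massiveLaplacian, freeSymbol, freeSymbol,
      Finset.prod_range_succ]
    push_cast
    ring

lemma hasTemperateGrowth_inv_sq_add_sq {m : ℝ} (hm : m ≠ 0) :
    (fun η : ℝ ↦ (((m ^ 2 + (2 * π * η) ^ 2 : ℝ)⁻¹ : ℝ) : ℂ)).HasTemperateGrowth := by
  have h : (fun η : ℝ ↦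
      (m ^ 2)⁻¹ * (1 + ‖2 * π / m * η‖ ^ 2) ^ (-1 : ℝ)).HasTemperateGrowth :=
    (Function.HasTemperateGrowth.const _).mul <|
      (Function.hasTemperateGrowth_one_add_norm_sq_rpow ℝ (-1)).comp (by fun_prop)
  have heq : (fun η : ℝ ↦ (m ^ 2 + (2 * π * η) ^ 2 : ℝ)⁻¹) =
      fun η ↦ (m ^ 2)⁻¹ * (1 + ‖2 * π / m * η‖ ^ 2) ^ (-1 : ℝ) := by
    ext η
    rw [Real.rpow_neg_one, ← mul_inv, Real.norm_eq_abs, sq_abs]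
    field_simp
  exact Function.Complex.hasTemperateGrowth_ofReal.comp (heq ▸ h)

lemma massiveLaplacian_surjective {m : ℕ} (hm : m ≠ 0) :
    Function.Surjective (massiveLaplacian m) := by
  intro v
  refine ⟨𝓕⁻ (SchwartzMap.smulLeftCLM ℂ
    (fun η : ℝ ↦ (((m ^ 2 + (2 * π * η) ^ 2 : ℝ)⁻¹ : ℝ) : ℂ)) (𝓕 v)), ?_⟩
  refine (FourierTransform.fourierEquiv ℂ 𝓢(ℝ, ℂ)).injective (SchwartzMap.ext fun η ↦ ?_)
  have hgrowth := hasTemperateGrowth_inv_sq_add_sq (m := m) (Nat.cast_ne_zero.2 hm)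
  have hsymbol : (m : ℝ) ^ 2 + (2 * π * η) ^ 2 ≠ 0 := by positivity
  simp only [FourierTransform.fourierEquiv_apply]
  rw [fourier_massiveLaplacian, FourierTransform.fourier_fourierInv_eq,
    SchwartzMap.smulLeftCLM_apply_apply hgrowth, smul_eq_mul,
    ← mul_assoc, ← ofReal_mul, mul_inv_cancel₀ hsymbol, ofReal_one, one_mul]

end FourierMultiplier

section Adjoint

lemma integral_mul_lowering (k : ℕ) {φ φ' : ℝ → ℂ} (hφ : φ.HasTemperateGrowth)
    (hφ' : ∀ x, HasDerivAt φ (φ' x) x) (u : 𝓢(ℝ, ℂ)) :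
    ∫ x, φ x * lowering k u x = ∫ x, (k * Real.tanh x * φ x - φ' x) * u x := by
  set v : 𝓢(ℝ, ℂ) := SchwartzMap.smulLeftCLM ℂ φ u
  have hv (w : 𝓢(ℝ, ℂ)) (x : ℝ) : SchwartzMap.smulLeftCLM ℂ φ w x = φ x * w x :=
    SchwartzMap.smulLeftCLM_apply_apply hφ w x
  have hderiv (x : ℝ) : deriv v x = φ' x * u x + φ x * deriv u x := by
    rw [funext (hv u)]
    exact ((hφ' x).mul (u.hasDerivAt x)).deriv
  have hint : Integrable fun x ↦ φ x * lowering k u x := by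
    rw [← funext (hv (lowering k u))]
    exact SchwartzMap.integrable _
  have hint' : Integrable (deriv v) := (SchwartzMap.derivCLM ℂ ℂ v).integrable
  calc ∫ x, φ x * lowering k u x
      = (∫ x, φ x * lowering k u x) - ∫ x, deriv v x := by
        rw [integral_eq_zero_of_hasDerivAt_of_integrable v.hasDerivAt hint' v.integrable, sub_zero]
    _ = ∫ x, (φ x * lowering k u x - deriv v x) := (integral_sub hint hint').symm
    _ = ∫ x, (k * Real.tanh x * φ x - φ' x) * u x := by
        refine integral_congr_ae (.of_forall fun x ↦ ?_)
        simp only [hderiv, lowering_apply]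
        ring

lemma inner_lowering (k : ℕ) (u f : 𝓢(ℝ, ℂ)) :
    ⟪u.toLp 2, (lowering k f).toLp 2⟫ = ⟪(raising k u).toLp 2, f.toLp 2⟫ := by
  have hu : (fun x ↦ (starRingEnd ℂ) (u x)).HasTemperateGrowth :=
    Complex.conjCLE.toContinuousLinearMap.hasTemperateGrowth.comp u.hasTemperateGrowth
  have hu' (x : ℝ) :
      HasDerivAt (fun y ↦ (starRingEnd ℂ) (u y)) ((starRingEnd ℂ) (deriv u x)) x :=
    (u.hasDerivAt x).star
  rw [SchwartzMap.inner_toL2_toL2_eq _ _ volume, SchwartzMap.inner_toL2_toL2_eq _ _ volume]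
  simp only [RCLike.inner_apply']
  rw [integral_mul_lowering k hu hu']
  refine integral_congr_ae (.of_forall fun x ↦ ?_)
  simp only [raising_apply, map_add, map_neg, map_mul, map_natCast, conj_ofReal]
  ring

lemma inner_toFree (N : ℕ) (u f : 𝓢(ℝ, ℂ)) :
    ⟪u.toLp 2, (toFree N f).toLp 2⟫ = ⟪(ofFree N u).toLp 2, f.toLp 2⟫ := by
  induction N generalizing f with
  | zero => rfl
  | succ N ih => rw [toFree_succ, ih, inner_lowering, ofFree_succ]

end Adjoint

section BoundStates

/-- Orthogonality of `f` to the bound states `A_N* ⋯ A_{k+1}* sech^k`, `1 ≤ k ≤ N`, of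
`-∂² - N(N+1) sech²`. The adjoints are moved onto `f`, so that `A_{k+1} ⋯ A_N f` is tested against
`sech^k`. -/
def OrthogonalToBoundStates : ℕ → 𝓢(ℝ, ℂ) → Prop
  | 0, _ => True
  | N + 1, f => ∫ x, f x * ((sech x ^ (N + 1) : ℝ) : ℂ) = 0 ∧
      OrthogonalToBoundStates N (lowering (N + 1) f)

lemma eq_mul_sech_pow_of_lowering_eq_zero {k : ℕ} {w : 𝓢(ℝ, ℂ)} (hw : lowering k w = 0) (x : ℝ) :
    w x = w 0 * ((sech x ^ k : ℝ) : ℂ) := by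
  have hderiv (y : ℝ) : HasDerivAt (fun y ↦ (Real.cosh y : ℂ) ^ k * w y) 0 y := by
    refine ((hasDerivAt_cosh_pow k y).mul (w.hasDerivAt y)).congr_deriv ?_
    have hwy : deriv w y + k * (Real.tanh y * w y) = 0 := by
      rw [← lowering_apply, hw, zero_apply]
    linear_combination (Real.cosh y : ℂ) ^ k * hwy
  have hconst : (Real.cosh x : ℂ) ^ k * w x = w 0 := by
    simpa using is_const_of_deriv_eq_zero (fun y ↦ (hderiv y).differentiableAt)
      (fun y ↦ (hderiv y).deriv) x 0
  have hcosh : (Real.cosh x : ℂ) ≠ 0 := ofReal_ne_zero.2 (Real.cosh_pos x).ne'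
  rw [← hconst, sech, ofReal_pow, ofReal_inv, inv_pow]
  field_simp

lemma eq_raising_of_lowering_eq {k : ℕ} {f g : 𝓢(ℝ, ℂ)}
    (hf : ∫ x, f x * ((sech x ^ k : ℝ) : ℂ) = 0)
    (hfg : lowering k f = lowering k (raising k g)) : f = raising k g := by
  set w := f - raising k g with hw
  have hker : lowering k w = 0 := by rw [hw, map_sub, hfg, sub_self]
  have hinner_f : ⟪w.toLp 2, f.toLp 2⟫ = 0 := by
    have hintegrand (x : ℝ) :
        ⟪w x, f x⟫ = (starRingEnd ℂ) (w 0) * (f x * ((sech x ^ k : ℝ) : ℂ)) := by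
      rw [RCLike.inner_apply, eq_mul_sech_pow_of_lowering_eq_zero hker x, map_mul, conj_ofReal]
      ring
    simp only [SchwartzMap.inner_toL2_toL2_eq, hintegrand, integral_const_mul, hf, mul_zero]
  have hinner_range : ⟪w.toLp 2, (raising k g).toLp 2⟫ = 0 := by
    rw [← inner_conj_symm, ← inner_lowering, hker]
    simp [SchwartzMap.inner_toL2_toL2_eq]
  have hw_sub : w.toLp 2 volume = f.toLp 2 volume - (raising k g).toLp 2 volume :=
    map_sub (SchwartzMap.toLpCLM ℂ ℂ 2 volume) f (raising k g)
  have hinner_self : ⟪w.toLp 2, w.toLp 2⟫ = 0 := by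
    conv_lhs => rw [hw_sub, inner_sub_right, ← hw_sub]
    rw [hinner_f, hinner_range, sub_zero]
  have hw_zero : w = 0 := SchwartzMap.injective_toLp 2 volume (inner_self_eq_zero.1 hinner_self)
  exact sub_eq_zero.1 hw_zero

lemma OrthogonalToBoundStates.exists_ofFree_eq {N : ℕ} {f : 𝓢(ℝ, ℂ)}
    (hf : OrthogonalToBoundStates N f) : ∃ h, ofFree N h = f := by
  induction N generalizing f with
  | zero => exact ⟨f, rfl⟩
  | succ N ih =>
    obtain ⟨hsech, hlower⟩ := hf
    obtain ⟨v, hv⟩ := ih hlower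
    obtain ⟨h, rfl⟩ := massiveLaplacian_surjective (m := N + 1) N.succ_ne_zero v
    have hfh : lowering (N + 1) f = lowering (N + 1) (raising (N + 1) (ofFree N h)) := by
      rw [lowering_raising_ofFree, hv]
    exact ⟨h, (eq_raising_of_lowering_eq hsech hfh).symm⟩

theorem OrthogonalToBoundStates.integral_norm_fourier_toFree_sq {N : ℕ} {f : 𝓢(ℝ, ℂ)}
    (hf : OrthogonalToBoundStates N f) :
    ∫ η, (freeSymbol N (2 * π * η))⁻¹ * ‖𝓕 (toFree N f) η‖ ^ 2 = ∫ x, ‖f x‖ ^ 2 := by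
  obtain ⟨h, rfl⟩ := hf.exists_ofFree_eq
  have hsymbol (η : ℝ) :
      (((freeSymbol N (2 * π * η))⁻¹ * ‖𝓕 (toFree N (ofFree N h)) η‖ ^ 2 : ℝ) : ℂ) =
        ⟪𝓕 h η, 𝓕 (toFree N (ofFree N h)) η⟫ := by
    have hpos := freeSymbol_pos N (2 * π * η)
    rw [fourier_toFree_ofFree, norm_mul, Complex.norm_of_nonneg hpos.le, RCLike.inner_apply,
      mul_assoc (_ : ℂ) (𝓕 h η), mul_conj, normSq_eq_norm_sq, ← ofReal_mul, ofReal_inj]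
    field_simp
  apply ofReal_injective
  rw [← integral_complex_ofReal, ← integral_complex_ofReal]
  simp only [hsymbol]
  rw [SchwartzMap.integral_inner_fourier_fourier, ← SchwartzMap.inner_toL2_toL2_eq _ _ volume,
    inner_toFree, SchwartzMap.inner_toL2_toL2_eq _ _ volume]
  simp only [inner_self_eq_norm_sq_to_K, ofReal_pow]
  rfl

lemma orthogonalToBoundStates_two {f : 𝓢(ℝ, ℂ)}
    (hY : ∫ x, f x * ((sech x ^ 2 : ℝ) : ℂ) = 0)
    (hQ' : ∫ x, f x * ((sech x * Real.tanh x : ℝ) : ℂ) = 0) :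
    OrthogonalToBoundStates 2 f := by
  refine ⟨hY, ?_, trivial⟩
  -- `A_2* sech = 3 sech tanh`
  calc ∫ x, lowering 2 f x * ((sech x ^ 1 : ℝ) : ℂ)
      = ∫ x, (sech x : ℂ) * lowering 2 f x := by simp only [pow_one, mul_comm]
    _ = ∫ x, ((2 : ℕ) * Real.tanh x * sech x - -Real.tanh x * sech x) * f x :=
        integral_mul_lowering 2 hasTemperateGrowth_sech hasDerivAt_sech f
    _ = ∫ x, 3 * (f x * ((sech x * Real.tanh x : ℝ) : ℂ)) := by
        refine integral_congr_ae (.of_forall fun x ↦ ?_)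
        simp only [ofReal_mul, Nat.cast_ofNat]
        ring
    _ = 0 := by rw [integral_const_mul, hQ', mul_zero]

end BoundStates

section DistortedFourier

lemma fourier_toFree_two (f : 𝓢(ℝ, ℂ)) (ξ : ℝ) :
    𝓕 (toFree 2 f) (ξ / (2 * π)) =
      ∫ x, (-(ξ : ℂ) ^ 2 + 3 * I * ξ * Real.tanh x + 3 * (Real.tanh x : ℂ) ^ 2 - 1)
        * planeWave ξ x * f x := by
  have htanh := hasTemperateGrowth_tanh
  have hwave := hasTemperateGrowth_planeWave ξ
  calc 𝓕 (toFree 2 f) (ξ / (2 * π))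
      = ∫ x, planeWave ξ x * lowering 1 (lowering 2 f) x :=
        fourier_div_two_pi_eq_integral_planeWave _ ξ
    _ = ∫ x, (I * ξ + Real.tanh x) * planeWave ξ x * lowering 2 f x := by
        rw [integral_mul_lowering 1 hwave (hasDerivAt_planeWave ξ)]
        refine integral_congr_ae (.of_forall fun x ↦ ?_)
        push_cast
        ring
    _ = _ := by
        rw [integral_mul_lowering 2 (φ := fun x ↦ (I * ξ + Real.tanh x) * planeWave ξ x)
          (by fun_prop)
          fun x ↦ ((hasDerivAt_tanh x).const_add (I * ξ)).mul (hasDerivAt_planeWave ξ x)]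
        refine integral_congr_ae (.of_forall fun x ↦ ?_)
        simp only [Nat.cast_ofNat]
        linear_combination ((ξ : ℂ) ^ 2 * planeWave ξ x * f x) * I_sq

lemma conj_eFun (x ξ : ℝ) :
    (starRingEnd ℂ) (eFun x ξ) = ((√(2 * π) : ℝ) : ℂ)⁻¹ *
      ((-(ξ : ℂ) ^ 2 + 3 * I * ξ * Real.tanh x + 3 * (Real.tanh x : ℂ) ^ 2 - 1) /
        (-(ξ : ℂ) ^ 2 - 3 * I * (|ξ| : ℝ) + 2)) * planeWave ξ x := by
  have hwave : (starRingEnd ℂ) (Complex.exp (I * x * ξ)) = planeWave ξ x := by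
    rw [planeWave, ← Complex.exp_conj]
    simp
  simp only [eFun, map_mul, map_div₀, map_inv₀, hwave, map_add, map_sub, map_neg, map_pow,
    conj_ofReal, conj_I, map_one, map_ofNat]
  ring

lemma distFT_eq (f : 𝓢(ℝ, ℂ)) (ξ : ℝ) :
    distFT f ξ = ((√(2 * π) : ℝ) : ℂ)⁻¹ * (-(ξ : ℂ) ^ 2 - 3 * I * (|ξ| : ℝ) + 2)⁻¹ *
      𝓕 (toFree 2 f) (ξ / (2 * π)) := by
  rw [fourier_toFree_two, distFT, ← integral_const_mul]
  refine integral_congr_ae (.of_forall fun x ↦ ?_)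
  simp only [conj_eFun]
  ring

lemma norm_distFT_denom_sq (ξ : ℝ) :
    ‖-(ξ : ℂ) ^ 2 - 3 * I * (|ξ| : ℝ) + 2‖ ^ 2 = freeSymbol 2 ξ := by
  have h : -(ξ : ℂ) ^ 2 - 3 * I * (|ξ| : ℝ) + 2 =
      ((2 - ξ ^ 2 : ℝ) : ℂ) + ((-3 * |ξ| : ℝ) : ℂ) * I := by
    push_cast
    ring
  rw [h, ← normSq_eq_norm_sq, normSq_add_mul_I, mul_pow, sq_abs, freeSymbol_two]
  ring

lemma norm_distFT_sq (f : 𝓢(ℝ, ℂ)) (ξ : ℝ) :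
    ‖distFT f ξ‖ ^ 2 =
      (2 * π)⁻¹ * ((freeSymbol 2 ξ)⁻¹ * ‖𝓕 (toFree 2 f) (ξ / (2 * π))‖ ^ 2) := by
  rw [distFT_eq, norm_mul, norm_mul, norm_inv, norm_inv, mul_pow, mul_pow, inv_pow, inv_pow,
    norm_distFT_denom_sq, Complex.norm_of_nonneg (Real.sqrt_nonneg _),
    Real.sq_sqrt (by positivity), mul_assoc]

lemma integral_norm_distFT_sq (f : 𝓢(ℝ, ℂ)) :
    ∫ ξ, ‖distFT f ξ‖ ^ 2 =
      ∫ η, (freeSymbol 2 (2 * π * η))⁻¹ * ‖𝓕 (toFree 2 f) η‖ ^ 2 := by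
  let F (η : ℝ) : ℝ := (freeSymbol 2 (2 * π * η))⁻¹ * ‖𝓕 (toFree 2 f) η‖ ^ 2
  have hrescale (ξ : ℝ) : ‖distFT f ξ‖ ^ 2 = (2 * π)⁻¹ * F (ξ / (2 * π)) := by
    have hcancel : 2 * π * (ξ / (2 * π)) = ξ := mul_div_cancel₀ _ (by positivity)
    simp only [norm_distFT_sq, F, hcancel]
  simp only [hrescale]
  rw [integral_const_mul, Measure.integral_comp_div F, abs_of_pos (by positivity), smul_eq_mul,
    inv_mul_cancel_left₀ (by positivity)]

end DistortedFourier

end PoschlTeller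

theorem distorted_Plancherel
    (f : SchwartzMap ℝ ℂ)
    -- f is orthogonal to the bound state Y (∝ sech²)
    (hY : (∫ x : ℝ, f x * (((sech x) ^ 2 : ℝ) : ℂ)) = 0)
    -- f is orthogonal to the bound state Q′ (∝ sech · tanh)
    (hQ' : (∫ x : ℝ, f x * ((sech x * Real.tanh x : ℝ) : ℂ)) = 0) :
    (∫ ξ : ℝ, ‖distFT (⇑f) ξ‖ ^ 2) = ∫ x : ℝ, ‖f x‖ ^ 2 := by
  rw [PoschlTeller.integral_norm_distFT_sq,
    (PoschlTeller.orthogonalToBoundStates_two hY hQ').integral_norm_fourier_toFree_sq]
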